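/- arXiv:math/0703391 — 2 statements merged into one kernel-verified Lean document; each statement's English description precedes it below -/
import Mathlib

section
/- The only solutions in positive integers (x, y) of the Diophantine equation x² = 2y⁴ − 1 are (x, y) = (1, 1) and (x, y) = (239, 13). -/
/-!
Factoring `x + i` over the Gaussian integers turns the equation into the quartic Thue equation
`im ((1 + i) ξ ^ 4) = ± 1` with `norm ξ = y`. Put `a = 239 + i` and `β = ξ (3 - 2i)`. Then
`β ^ 4 * conj a = - 13 ^ 4 (1 + i) ξ ^ 4` has imaginary part `± 13 ^ 4`, so `β`, rotated by
`l = exp (- i arg a / 4)`, is very close to one of the four lines on which the fourth power is real,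
and a small Gaussian multiple `γ` of `β`, rotated by `l`, is very close to the real axis.

Since `arg a` is tiny, the Padé approximants to the fourth root of `a / conj a` provide Gaussian
integers `w n` which also become almost real when rotated by `l`, and which are not too large. As
consecutive `w n` are linearly independent over `ℝ`, one of them is not parallel to `γ`, and then
`im (γ * conj (w n))` is a nonzero integer. This contradicts the closeness of `γ l` and `w n * l` to
the real axis unless `y < 2 * 10 ^ 13`.

Finally `(x, y ^ 2)` is a solution of the negative Pell equation `x ^ 2 - 2 y ^ 2 = -1`, and only
two solutions in the remaining range have a square second component.
-/

open Finset Complex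
open scoped Nat Polynomial ComplexConjugate

section NegativePell

/-- The positive solutions of `x ^ 2 - 2 * y ^ 2 = -1`, in increasing order. -/
def negPell : ℕ → ℤ × ℤ
  | 0 => (1, 1)
  | n + 1 => (3 * (negPell n).1 + 4 * (negPell n).2, 2 * (negPell n).1 + 3 * (negPell n).2)

lemma exists_negPell_eq {x : ℤ} {y : ℕ} (hx : 0 < x) (hy : 0 < y)
    (h : x ^ 2 = 2 * (y : ℤ) ^ 2 - 1) : ∃ n, negPell n = (x, (y : ℤ)) := by
  induction y using Nat.strong_induction_on generalizing x with
  | _ y ih =>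
    rcases Nat.lt_or_ge y 3 with hy3 | hy3
    · have hx3 : x < 3 := by
        have : (y : ℤ) < 3 := mod_cast hy3
        nlinarith
      refine ⟨0, ?_⟩
      interval_cases y <;> interval_cases x <;> simp_all [negPell]
    · have : (3 : ℤ) ≤ y := mod_cast hy3
      have hyx : (y : ℤ) < x := by nlinarith
      have hx' : 0 < 3 * x - 4 * y := by nlinarith
      have hy' : 0 < 3 * (y : ℤ) - 2 * x := by nlinarith
      obtain ⟨z, hz⟩ := Int.eq_ofNat_of_zero_le hy'.le
      obtain ⟨n, hn⟩ := ih z (by omega) hx' (by omega) (by rw [← hz]; linear_combination h)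
      refine ⟨n + 1, ?_⟩
      rw [negPell, hn, ← hz]
      ext <;> ring

lemma five_pow_le_negPell (n : ℕ) : 5 ^ n ≤ (negPell n).2 ∧ (negPell n).2 ≤ (negPell n).1 := by
  induction n with
  | zero => simp [negPell]
  | succ n ih =>
    simp only [negPell, pow_succ]
    have : (0 : ℤ) < 5 ^ n := by positivity
    constructor <;> linarith

lemma eq_zero_or_eq_three_of_isSquare_negPell {n : ℕ} (hn : n < 39)
    (h : IsSquare (negPell n).2) : n = 0 ∨ n = 3 := by
  interval_cases n <;> first | exact .inl rfl | exact .inr rfl | norm_num [negPell] at h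

lemma eq_one_or_eq_thirteen_of_lt {x y : ℤ} (hx : 0 < x) (hy : 0 < y) (hy' : y < 2 * 10 ^ 13)
    (h : x ^ 2 = 2 * y ^ 4 - 1) : (x = 1 ∧ y = 1) ∨ (x = 239 ∧ y = 13) := by
  lift y to ℕ using hy.le
  obtain ⟨n, hn⟩ := exists_negPell_eq (y := y ^ 2) hx (pow_pos (mod_cast hy) 2)
    (by rw [h]; push_cast; ring)
  rw [Nat.cast_pow] at hn
  have hlt : n < 39 := by
    have hsq : (y : ℤ) ^ 2 < 5 ^ 39 :=
      calc (y : ℤ) ^ 2 < (2 * 10 ^ 13) ^ 2 := by gcongr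
        _ < 5 ^ 39 := by norm_num
    have hle := (five_pow_le_negPell n).1
    rw [hn] at hle
    exact (pow_lt_pow_iff_right₀ (by norm_num)).mp (hle.trans_lt hsq)
  have hsquare : IsSquare (negPell n).2 := hn ▸ IsSquare.sq _
  obtain ⟨rfl, hy2⟩ := Prod.ext_iff.mp hn
  rcases eq_zero_or_eq_three_of_isSquare_negPell hlt hsquare with rfl | rfl
  · exact .inl ⟨rfl, (pow_left_inj₀ hy.le one_pos.le two_ne_zero).mp hy2.symm⟩
  · exact .inr ⟨rfl, (pow_left_inj₀ hy.le (by norm_num) two_ne_zero).mp hy2.symm⟩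

end NegativePell

section GaussianFactorisation

lemma gaussianInt_eq_of_isUnit {u : GaussianInt} (hu : IsUnit u) :
    u = 1 ∨ u = -1 ∨ u = ⟨0, 1⟩ ∨ u = -⟨0, 1⟩ := by
  have h := (Zsqrtd.norm_eq_one_iff' (by norm_num) u).mpr hu
  obtain ⟨p, q⟩ := u
  replace h : p ^ 2 + q ^ 2 = 1 := by
    rw [← h, Zsqrtd.norm_def]
    ring
  have hp := abs_le.mp ((sq_le_one_iff_abs_le_one p).mp (by linarith [sq_nonneg q]))
  have hq := abs_le.mp ((sq_le_one_iff_abs_le_one q).mp (by linarith [sq_nonneg p]))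
  obtain ⟨hp₀, hp₁⟩ := hp
  obtain ⟨hq₀, hq₁⟩ := hq
  interval_cases p <;> interval_cases q <;> revert h <;> decide

lemma isCoprime_star_of_odd_norm {z : GaussianInt} (hz : IsCoprime z.re z.im)
    (hodd : Odd z.norm) : IsCoprime z (star z) := by
  obtain ⟨u, v, huv⟩ := hz
  obtain ⟨m, hm⟩ := hodd
  have hnorm : z * star z = 2 * m + 1 := by
    rw [← Zsqrtd.norm_eq_mul_conj, hm]
    push_cast
    rfl
  have htwo : (⟨u, -v⟩ : GaussianInt) * z + ⟨u, v⟩ * star z = 2 := by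
    ext
    · simp only [Zsqrtd.re_add, Zsqrtd.re_mul, Zsqrtd.re_star, Zsqrtd.im_star, Zsqrtd.re_ofNat]
      linear_combination 2 * huv
    · simp only [Zsqrtd.im_add, Zsqrtd.im_mul, Zsqrtd.re_star, Zsqrtd.im_star, Zsqrtd.im_ofNat]
      ring
  exact ⟨star z - m * ⟨u, -v⟩, -m * ⟨u, v⟩, by linear_combination hnorm - m * htwo⟩

lemma exists_associated_pow_of_norm_eq_pow {z : GaussianInt} (hz : IsCoprime z.re z.im)
    (hodd : Odd z.norm) {y : ℤ} {n : ℕ} (h : z.norm = y ^ n) :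
    ∃ ξ : GaussianInt, Associated (ξ ^ n) z ∧ ξ.norm ^ n = y ^ n := by
  have hmul : z * star z = (y : GaussianInt) ^ n := by
    rw [← Zsqrtd.norm_eq_mul_conj, h, Int.cast_pow]
  obtain ⟨ξ, hξ⟩ := exists_associated_pow_of_mul_eq_pow' (isCoprime_star_of_odd_norm hz hodd) hmul
  refine ⟨ξ, hξ, ?_⟩
  obtain ⟨u, hu⟩ := hξ
  have hu' : (u : GaussianInt).norm = 1 := (Zsqrtd.norm_eq_one_iff' (by norm_num) _).mpr u.isUnit
  rw [← h, ← hu, Zsqrtd.norm_mul, hu', mul_one]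
  exact (map_pow Zsqrtd.normMonoidHom ξ n).symm

lemma exists_abs_im_mul_pow_four_eq_one {x y : ℤ} (hy : 0 < y) (h : x ^ 2 = 2 * y ^ 4 - 1) :
    ∃ ξ : GaussianInt, ξ.norm = y ∧ |((⟨1, 1⟩ : GaussianInt) * ξ ^ 4).im| = 1 := by
  have hx : Odd x :=
    (Int.odd_pow.mp ⟨y ^ 4 - 1, by rw [h]; ring⟩ : Odd x ∨ 2 = 0).resolve_right two_ne_zero
  obtain ⟨k, rfl⟩ := hx
  have hnorm : (⟨k + 1, -k⟩ : GaussianInt).norm = y ^ 4 := by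
    rw [Zsqrtd.norm_def]
    linarith
  obtain ⟨ξ, ⟨u, hu⟩, hξ⟩ := exists_associated_pow_of_norm_eq_pow
    (z := (⟨k + 1, -k⟩ : GaussianInt)) ⟨1, 1, by ring⟩
    ⟨k ^ 2 + k, by rw [Zsqrtd.norm_def]; ring⟩ hnorm
  have hξy : ξ.norm = y :=
    (pow_left_inj₀ (GaussianInt.norm_nonneg ξ) hy.le (by norm_num)).mp hξ
  have hu₁ : ((⟨1, 1⟩ : GaussianInt) * (ξ ^ 4 * u)).im = 1 := by
    rw [hu]
    simp
  have hstar (z : GaussianInt) :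
      ((⟨1, 1⟩ : GaussianInt) * star z).im = ((⟨1, 1⟩ : GaussianInt) * (z * ⟨0, 1⟩)).im := by
    simp only [Zsqrtd.im_mul, Zsqrtd.re_mul, Zsqrtd.re_star, Zsqrtd.im_star]
    ring
  rcases gaussianInt_eq_of_isUnit u.isUnit with hu' | hu' | hu' | hu' <;> rw [hu'] at hu₁
  · exact ⟨ξ, hξy, by rw [← mul_one (ξ ^ 4), hu₁, abs_one]⟩
  · rw [mul_neg_one, mul_neg, Zsqrtd.im_neg] at hu₁
    exact ⟨ξ, hξy, by rw [← abs_neg, hu₁, abs_one]⟩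
  · exact ⟨star ξ, by rw [Zsqrtd.norm_conj, hξy], by rw [← star_pow, hstar, hu₁, abs_one]⟩
  · rw [mul_neg, mul_neg, Zsqrtd.im_neg] at hu₁
    exact ⟨star ξ, by rw [Zsqrtd.norm_conj, hξy],
      by rw [← star_pow, hstar, ← abs_neg, hu₁, abs_one]⟩

end GaussianFactorisation

section Arithmetic

lemma factorial_dvd_prod_sub (b : ℤ) (m : ℕ) : (m ! : ℤ) ∣ ∏ t ∈ range m, (b - t) := by
  have h := Ring.descPochhammer_eq_factorial_smul_choose b m
  rw [← Polynomial.eval_eq_smeval, descPochhammer_eval_eq_prod_range, nsmul_eq_mul] at h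
  exact ⟨_, h⟩

lemma dvd_prod_add_mul_of_isCoprime {d q : ℤ} {m : ℕ} (hdq : IsCoprime d q) (hq : q ∣ m !) (b : ℤ) :
    q ∣ ∏ t ∈ range m, (b + d * t) := by
  obtain ⟨u, v, huv⟩ := hdq
  have hmod : ∏ t ∈ range m, (b + d * (t : ℤ)) ≡ ∏ t ∈ range m, (-d * (-(u * b) - t)) [ZMOD q] :=
    Int.ModEq.prod fun t _ => Int.modEq_iff_dvd.mpr ⟨-v * b, by linear_combination b * huv⟩
  rw [← Int.modEq_zero_iff_dvd]
  refine hmod.trans (Int.modEq_zero_iff_dvd.mpr ?_)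
  rw [prod_mul_distrib]
  exact (hq.trans (factorial_dvd_prod_sub _ m)).mul_left _

lemma factorial_dvd_pow_mul_prod_add_mul {d r N : ℕ} (h : d ∣ r ^ N) (b : ℤ) (m : ℕ) :
    (m ! : ℤ) ∣ r ^ m * ∏ t ∈ range m, (b + d * t) := by
  rw [Int.natCast_dvd, Nat.dvd_iff_prime_pow_dvd_dvd]
  intro p k hp hk
  rw [← Int.natCast_dvd]
  have := Fact.mk hp
  by_cases hpd : p ∣ d
  · have hpr : p ∣ r := hp.dvd_of_dvd_pow (hpd.trans h)
    have hkm : k ≤ m :=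
      ((padicValNat_dvd_iff_le m.factorial_ne_zero).mp hk).trans (padicValNat_factorial_le p m)
    exact dvd_mul_of_dvd_left (mod_cast (pow_dvd_pow_of_dvd hpr k).trans (pow_dvd_pow r hkm)) _
  · have hdp : IsCoprime (d : ℤ) (p ^ k : ℕ) :=
      Nat.isCoprime_iff_coprime.mpr (((hp.coprime_iff_not_dvd.mpr hpd).symm).pow_right k)
    exact (dvd_prod_add_mul_of_isCoprime hdp (mod_cast hk) b).mul_left _

end Arithmetic

/-- Numerators of the diagonal Padé approximants of `(a / conj a) ^ κ`, the denominators being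
their complex conjugates; equivalently, homogenised Jacobi polynomials. They are defined by the
three-term recurrence. -/
noncomputable def padeNum (κ : ℝ) (a : ℂ) : ℕ → ℂ
  | 0 => 1
  | 1 => ⟨a.re, κ * a.im⟩
  | n + 2 => ((2 * n + 3) * a.re) • padeNum κ a (n + 1) +
      (((n + 1) ^ 2 - κ ^ 2) * a.im ^ 2) • padeNum κ a n

/-- The coefficient of `a ^ j * (conj a - a) ^ (n - j)` in `2 ^ n * padeNum κ a n`. -/
noncomputable def padeCoeff (κ : ℝ) (n j : ℕ) : ℝ :=
  n.choose j * (n + 1).ascFactorial j * ∏ t ∈ Ico j n, (t + 1 - κ)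

section Coefficients

variable (κ : ℝ)

lemma padeCoeff_eq_zero_of_lt {n j : ℕ} (h : n < j) : padeCoeff κ n j = 0 := by
  simp [padeCoeff, Nat.choose_eq_zero_of_lt h]

lemma padeCoeff_succ_left (n j : ℕ) :
    (n + 1 - j) * padeCoeff κ (n + 1) j = (n + 1 + j) * (n + 1 - κ) * padeCoeff κ n j := by
  rcases lt_trichotomy j (n + 1) with h | rfl | h
  · have hchoose : (n.choose j : ℝ) * (n + 1) = (n + 1).choose j * (n + 1 - j) := by
      have := Nat.choose_mul_succ_eq n j
      zify [h.le] at this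
      exact_mod_cast this
    have hasc : ((n : ℝ) + 1) * (n + 2).ascFactorial j = (n + 1 + j) * (n + 1).ascFactorial j :=
      mod_cast Nat.succ_ascFactorial (n + 1) j
    rw [padeCoeff, padeCoeff, prod_Ico_succ_top (Nat.lt_succ_iff.mp h)]
    set P := ∏ t ∈ Ico j n, ((t : ℝ) + 1 - κ)
    linear_combination (((n + 2).ascFactorial j : ℝ) * (P * (n + 1 - κ))) * (-hchoose) +
      (n.choose j : ℝ) * (P * (n + 1 - κ)) * hasc
  · simp [padeCoeff_eq_zero_of_lt]
  · simp [padeCoeff_eq_zero_of_lt, h, (Nat.lt_succ_self n).trans h]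

lemma padeCoeff_succ_right (n j : ℕ) :
    (j + 1) * (j + 1 - κ) * padeCoeff κ n (j + 1) = (n - j) * (n + j + 1) * padeCoeff κ n j := by
  rcases lt_trichotomy j n with h | rfl | h
  · have hchoose : (n.choose (j + 1) : ℝ) * (j + 1) = n.choose j * (n - j) := by
      have := Nat.choose_succ_right_eq n j
      zify [h.le] at this
      exact_mod_cast this
    rw [padeCoeff, padeCoeff, Nat.ascFactorial_succ, prod_eq_prod_Ico_succ_bot h]
    push_cast
    set P := ∏ t ∈ Ico (j + 1) n, ((t : ℝ) + 1 - κ)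
    linear_combination (j + 1 - κ) * (n + 1 + j) * (n + 1).ascFactorial j * P * hchoose
  · simp [padeCoeff_eq_zero_of_lt]
  · simp [padeCoeff_eq_zero_of_lt, h, h.trans (Nat.lt_succ_self j)]

lemma padeCoeff_self (n : ℕ) : padeCoeff κ n n = n ! * n.centralBinom := by
  have := Nat.ascFactorial_eq_factorial_mul_choose n n
  simp [padeCoeff, Nat.centralBinom, two_mul, this]

lemma padeCoeff_succ_self (n : ℕ) :
    padeCoeff κ (n + 1) (n + 1) = 2 * (2 * n + 1) * padeCoeff κ n n := by
  have h : ((n : ℝ) + 1) * (n + 1).centralBinom = 2 * (2 * n + 1) * n.centralBinom :=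
    mod_cast Nat.succ_mul_centralBinom_succ n
  rw [padeCoeff_self, padeCoeff_self, Nat.factorial_succ]
  push_cast
  linear_combination (n ! : ℝ) * h

lemma padeCoeff_add_two_zero (n : ℕ) : padeCoeff κ (n + 2) 0 =
    (2 * n + 3) * padeCoeff κ (n + 1) 0 - ((n + 1) ^ 2 - κ ^ 2) * padeCoeff κ n 0 := by
  simp only [padeCoeff, Nat.Ico_zero_eq_range, prod_range_succ, Nat.choose_zero_right,
    Nat.ascFactorial_zero]
  push_cast
  ring

lemma padeCoeff_add_two_succ (n j : ℕ) : padeCoeff κ (n + 2) (j + 1) =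
    (2 * n + 3) * (2 * padeCoeff κ (n + 1) j + padeCoeff κ (n + 1) (j + 1)) -
      ((n + 1) ^ 2 - κ ^ 2) * padeCoeff κ n (j + 1) := by
  have h₁ := padeCoeff_succ_left κ n (j + 1)
  have h₂ := padeCoeff_succ_left κ (n + 1) (j + 1)
  have h₃ := padeCoeff_succ_right κ (n + 1) j
  push_cast at h₁ h₂ h₃
  rcases lt_trichotomy j (n + 1) with h | rfl | h
  · have hj : (n : ℝ) + 1 - j ≠ 0 := sub_ne_zero.mpr (mod_cast h.ne')
    have hs : (n : ℝ) + j + 2 ≠ 0 := by positivity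
    apply mul_left_cancel₀ (mul_ne_zero hj hs)
    linear_combination (n + j + 2 : ℝ) * h₂ + 2 * (2 * n + 3) * h₃ - (n + 1 - j) * (n + 1 + κ) * h₁
  · rw [padeCoeff_succ_self, padeCoeff_eq_zero_of_lt κ (Nat.lt_succ_self (n + 1)),
      padeCoeff_eq_zero_of_lt κ (show n < n + 1 + 1 by omega)]
    push_cast
    ring
  · simp only [padeCoeff_eq_zero_of_lt κ (show n + 2 < j + 1 by omega),
      padeCoeff_eq_zero_of_lt κ (show n + 1 < j + 1 by omega), padeCoeff_eq_zero_of_lt κ h,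
      padeCoeff_eq_zero_of_lt κ (show n < j + 1 by omega)]
    ring

/-- The dehomogenisation of `2 ^ n * padeNum κ a n` as a polynomial in `a / (conj a - a)`. -/
noncomputable def padePoly (n : ℕ) : ℝ[X] :=
  ∑ j ∈ range (n + 1), Polynomial.monomial j (padeCoeff κ n j)

lemma coeff_padePoly (n j : ℕ) : (padePoly κ n).coeff j = padeCoeff κ n j := by
  simp only [padePoly, Polynomial.finsetSum_coeff, Polynomial.coeff_monomial, sum_ite_eq',
    mem_range, Nat.lt_succ_iff, ite_eq_left_iff, not_le]
  exact fun h => (padeCoeff_eq_zero_of_lt κ h).symm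

open Polynomial in
lemma padePoly_add_two (n : ℕ) : padePoly κ (n + 2) =
    C (2 * n + 3 : ℝ) * (2 * (X * padePoly κ (n + 1)) + padePoly κ (n + 1)) -
      C ((n + 1) ^ 2 - κ ^ 2 : ℝ) * padePoly κ n := by
  ext (_ | j)
  · simp only [coeff_sub, coeff_C_mul, coeff_add, coeff_ofNat_mul, coeff_X_mul_zero, coeff_padePoly,
      padeCoeff_add_two_zero]
    ring
  · simp only [coeff_sub, coeff_C_mul, coeff_add, coeff_ofNat_mul, coeff_X_mul, coeff_padePoly,
      padeCoeff_add_two_succ]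

end Coefficients

lemma two_pow_mul_padeNum_eq_aeval (κ : ℝ) {a : ℂ} (ha : a.im ≠ 0) (n : ℕ) :
    2 ^ n * padeNum κ a n =
      (conj a - a) ^ n * Polynomial.aeval (a / (conj a - a)) (padePoly κ n) := by
  have hf : conj a - a ≠ 0 := sub_ne_zero.mpr (mt conj_eq_iff_im.mp ha)
  have hfim : conj a - a = -2 * a.im * I := by
    rw [← neg_sub, sub_conj]
    push_cast
    ring
  have hadd : 2 * a + (conj a - a) = 2 * a.re := by
    rw [two_mul, add_add_sub_cancel, add_conj]
    push_cast
    rfl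
  have hsq : (conj a - a) ^ 2 = -4 * a.im ^ 2 := by
    rw [hfim]; linear_combination 4 * (a.im : ℂ) ^ 2 * I_sq
  have hdiv : (conj a - a) * (a / (conj a - a)) = a := mul_div_cancel₀ a hf
  induction n using Nat.twoStepInduction with
  | zero => simp [padeNum, padePoly, padeCoeff]
  | one =>
    have hpoly : Polynomial.aeval (a / (conj a - a)) (padePoly κ 1) =
        1 - κ + 2 * (a / (conj a - a)) := by
      simp [padePoly, padeCoeff, sum_range_succ, Nat.ascFactorial]
    rw [hpoly, padeNum, mk_eq_add_mul_I]
    push_cast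
    linear_combination -hadd + κ * hfim - 2 * hdiv
  | more n ih₀ ih₁ =>
    rw [padePoly_add_two, padeNum]
    simp only [map_sub, map_mul, map_add, Polynomial.aeval_C, Polynomial.aeval_X, real_smul,
      map_ofNat]
    set T₁ := Polynomial.aeval (a / (conj a - a)) (padePoly κ (n + 1))
    set T₀ := Polynomial.aeval (a / (conj a - a)) (padePoly κ n)
    push_cast
    linear_combination 2 * ((2 * n + 3) * a.re) * ih₁ +
      4 * (((n + 1) ^ 2 - κ ^ 2) * a.im ^ 2) * ih₀ -
      (conj a - a) ^ (n + 1) * (2 * n + 3) * T₁ * (hadd + 2 * hdiv) +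
      (conj a - a) ^ n * T₀ * ((n + 1) ^ 2 - κ ^ 2) * hsq

lemma two_pow_mul_padeNum (κ : ℝ) {a : ℂ} (ha : a.im ≠ 0) (n : ℕ) :
    2 ^ n * padeNum κ a n =
      ∑ j ∈ range (n + 1), padeCoeff κ n j * a ^ j * (conj a - a) ^ (n - j) := by
  have hf : conj a - a ≠ 0 := sub_ne_zero.mpr (mt conj_eq_iff_im.mp ha)
  rw [two_pow_mul_padeNum_eq_aeval κ ha, padePoly, map_sum, mul_sum]
  refine sum_congr rfl fun j hj => ?_
  rw [Polynomial.aeval_monomial, coe_algebraMap, div_pow,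
    pow_sub₀ _ hf (Nat.lt_succ_iff.mp (mem_range.mp hj))]
  ring

section Integrality

variable {d r N : ℕ} (k : ℤ)

lemma exists_int_eq_padeCoeff (hd : d ≠ 0) (hdr : d ∣ r ^ N) (j m : ℕ) :
    ∃ z : ℤ, (z : ℝ) = (r * d) ^ m / (j + m)! * padeCoeff (k / d) (j + m) j := by
  obtain ⟨q, hq⟩ := factorial_dvd_pow_mul_prod_add_mul hdr (d * (j + 1) - k) m
  refine ⟨(j + m + j).choose j * q, ?_⟩
  have hq' : (r : ℝ) ^ m * ∏ t ∈ range m, (d * (j + 1) - k + d * t : ℝ) = m ! * q :=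
    mod_cast hq
  have hprod : (d : ℝ) ^ m * ∏ t ∈ Ico j (j + m), (t + 1 - k / d : ℝ) =
      ∏ t ∈ range m, (d * (j + 1) - k + d * t : ℝ) := by
    rw [prod_Ico_eq_prod_range, Nat.add_sub_cancel_left, pow_eq_prod_const, ← prod_mul_distrib]
    refine prod_congr rfl fun t _ => ?_
    push_cast
    field_simp
    ring
  have hchoose : ((j + m).choose j : ℝ) * j ! * m ! = (j + m)! :=
    mod_cast Nat.choose_symm_add ▸ Nat.add_choose_mul_factorial_mul_factorial j m
  rw [← hprod] at hq'
  rw [padeCoeff, Nat.ascFactorial_eq_factorial_mul_choose, ← hchoose]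
  set P := ∏ t ∈ Ico j (j + m), (t + 1 - k / d : ℝ)
  have hcj : ((j + m).choose j : ℝ) ≠ 0 := mod_cast (Nat.choose_pos (Nat.le_add_right j m)).ne'
  have hj : (j ! : ℝ) ≠ 0 := mod_cast j.factorial_ne_zero
  have hm : (m ! : ℝ) ≠ 0 := mod_cast m.factorial_ne_zero
  push_cast
  field_simp
  linear_combination (-(j + m + j).choose j : ℝ) * hq'

lemma exists_gaussianInt_eq_padeNum {e : ℕ} (hd : d ≠ 0) (hdr : d ∣ r ^ N) (he : r * d = 2 * e)
    {a : GaussianInt} (ha : a.im ≠ 0) (n : ℕ) :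
    ∃ w : GaussianInt, (w : ℂ) = (2 * e) ^ n / n ! * padeNum (k / d) a n := by
  have hcoeff (j : ℕ) (hj : j ∈ range (n + 1)) : ∃ z : ℤ,
      (z : ℝ) = (r * d) ^ (n - j) / n ! * padeCoeff (k / d) n j := by
    have := exists_int_eq_padeCoeff k hd hdr j (n - j)
    rwa [Nat.add_sub_cancel' (Nat.lt_succ_iff.mp (mem_range.mp hj))] at this
  choose! z hz using hcoeff
  have ha' : (a : ℂ).im ≠ 0 := by simpa [← GaussianInt.intCast_im] using ha
  have he' : (r : ℂ) * d = 2 * e := mod_cast he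
  have hconj : conj (a : ℂ) - a = 2 * ((⟨0, -a.im⟩ : GaussianInt) : ℂ) := by
    rw [← GaussianInt.toComplex_star, ← map_sub, ← map_ofNat GaussianInt.toComplex 2, ← map_mul]
    congr 1
    ext
    · simp only [Zsqrtd.re_sub, Zsqrtd.re_star, Zsqrtd.re_mul, Zsqrtd.im_ofNat]
      ring
    · simp only [Zsqrtd.im_sub, Zsqrtd.im_star, Zsqrtd.im_mul, Zsqrtd.re_ofNat, Zsqrtd.im_ofNat]
      ring
  refine ⟨∑ j ∈ range (n + 1), e ^ j * a ^ j * (z j * ⟨0, -a.im⟩ ^ (n - j)), ?_⟩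
  have hsum := two_pow_mul_padeNum (k / d) ha' n
  have h2 : (2 : ℂ) ^ n ≠ 0 := pow_ne_zero _ two_ne_zero
  rw [← mul_right_inj' h2, mul_left_comm (2 ^ n), hsum, map_sum, mul_sum, mul_sum]
  refine sum_congr rfl fun j hj => ?_
  have hzj := congrArg ofReal (hz j hj)
  push_cast at hzj
  obtain ⟨m, rfl⟩ := Nat.exists_eq_add_of_le (Nat.lt_succ_iff.mp (mem_range.mp hj))
  rw [Nat.add_sub_cancel_left, he'] at hzj
  simp only [map_mul, map_pow, map_natCast, map_intCast, hzj, hconj, Nat.add_sub_cancel_left]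
  ring

end Integrality

section Size

variable {κ : ℝ}

lemma sq_sub_sq_mem_Icc (hκ : |κ| ≤ 1) (n : ℕ) :
    ((n + 1) ^ 2 - κ ^ 2 : ℝ) ∈ Set.Icc 0 ((n + 1 : ℝ) ^ 2) := by
  have h1 : κ ^ 2 ≤ 1 := (sq_le_one_iff_abs_le_one κ).mpr hκ
  constructor <;> nlinarith [sq_nonneg κ, (n.cast_nonneg : (0 : ℝ) ≤ n)]

lemma norm_padeNum_le (hκ : |κ| ≤ 1) (a : ℂ) (n : ℕ) :
    ‖padeNum κ a n‖ ≤ n ! * (2 * ‖a‖) ^ n := by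
  induction n using Nat.twoStepInduction with
  | zero => simp [padeNum]
  | one =>
    have him : |κ * a.im| ≤ ‖a‖ := by
      rw [abs_mul]
      exact (mul_le_of_le_one_left (abs_nonneg _) hκ).trans (abs_im_le_norm a)
    calc ‖padeNum κ a 1‖ ≤ |a.re| + |κ * a.im| := norm_le_abs_re_add_abs_im _
      _ ≤ ‖a‖ + ‖a‖ := add_le_add (abs_re_le_norm a) him
      _ = 1 ! * (2 * ‖a‖) ^ 1 := by simp [two_mul]
  | more n ih₀ ih₁ =>
    obtain ⟨hc₀, hc₁⟩ := sq_sub_sq_mem_Icc hκ n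
    have hre : |a.re| ≤ ‖a‖ := abs_re_le_norm a
    have him : a.im ^ 2 ≤ 2 * ‖a‖ * (‖a‖ - |a.re|) := by
      have h : ‖a‖ ^ 2 = |a.re| ^ 2 + a.im ^ 2 := by
        rw [Complex.sq_norm, normSq_apply, sq_abs]
        ring
      nlinarith
    calc ‖padeNum κ a (n + 2)‖
        ≤ (2 * n + 3) * |a.re| * ‖padeNum κ a (n + 1)‖ +
          ((n + 1) ^ 2 - κ ^ 2) * a.im ^ 2 * ‖padeNum κ a n‖ := by
          refine (norm_add_le _ _).trans_eq ?_
          rw [norm_smul, norm_smul, norm_mul, norm_mul, Real.norm_of_nonneg hc₀,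
            Real.norm_of_nonneg (sq_nonneg _), Real.norm_eq_abs a.re,
            Real.norm_of_nonneg (by positivity)]
      _ ≤ (2 * n + 3) * |a.re| * ((n + 1)! * (2 * ‖a‖) ^ (n + 1)) +
          (n + 1) ^ 2 * (2 * ‖a‖ * (‖a‖ - |a.re|)) * (n ! * (2 * ‖a‖) ^ n) := by
          gcongr
      _ ≤ (n + 2)! * (2 * ‖a‖) ^ (n + 2) := by
          rw [Nat.factorial_succ (n + 1), Nat.factorial_succ n]
          push_cast
          have : 0 ≤ (n + 1) * ((n + 2) * (‖a‖ - |a.re|) + ‖a‖) * ‖a‖ * n ! * (2 * ‖a‖) ^ n := by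
            have := sub_nonneg.mpr hre
            positivity
          linear_combination 2 * this

lemma im_padeNum_succ_mul_conj_ne_zero (hκ : ∀ m : ℤ, κ ≠ m) {a : ℂ} (ha : a.im ≠ 0) (n : ℕ) :
    (padeNum κ a (n + 1) * conj (padeNum κ a n)).im ≠ 0 := by
  induction n with
  | zero => simpa [padeNum, ha] using mod_cast hκ 0
  | succ n ih =>
    have hrec : (padeNum κ a (n + 2) * conj (padeNum κ a (n + 1))).im =
        -(((n + 1) ^ 2 - κ ^ 2) * a.im ^ 2) * (padeNum κ a (n + 1) * conj (padeNum κ a n)).im := by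
      simp only [padeNum, mul_im, conj_re, conj_im, add_re, add_im, smul_re, smul_im, smul_eq_mul]
      ring
    have hκn : ((n + 1) ^ 2 - κ ^ 2 : ℝ) ≠ 0 := by
      rw [sub_ne_zero, Ne, sq_eq_sq_iff_eq_or_eq_neg, not_or]
      exact ⟨fun h => hκ (n + 1) (mod_cast h.symm),
        fun h => hκ (-(n + 1)) (by push_cast; linarith)⟩
    rw [hrec]
    exact mul_ne_zero (neg_ne_zero.mpr (mul_ne_zero hκn (pow_ne_zero 2 ha))) ih

end Size

section Remainder

variable {κ : ℝ}

lemma padeNum_real_smul (κ r : ℝ) (a : ℂ) (n : ℕ) :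
    padeNum κ (r • a) n = r ^ n • padeNum κ a n := by
  induction n using Nat.twoStepInduction with
  | zero => simp [padeNum]
  | one => apply Complex.ext <;> simp [padeNum, mul_left_comm]
  | more n ih₀ ih₁ =>
    simp only [padeNum, ih₀, ih₁, smul_re, smul_im, smul_eq_mul, smul_add, smul_smul]
    congr 2 <;> ring

lemma im_padeNum_eq_zero {a : ℂ} (ha : a.im = 0) (n : ℕ) : (padeNum κ a n).im = 0 := by
  induction n using Nat.twoStepInduction with
  | zero => simp [padeNum]
  | one => simp [padeNum, ha]
  | more n ih₀ ih₁ => simp only [padeNum, add_im, smul_im, ih₀, ih₁, smul_zero, add_zero]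

/-- The Padé numerator at `a = exp (θ * I)` divided by the square root `exp (κ * θ * I)` of
`(a / conj a) ^ κ`. The Padé remainder is `2 * I * exp (κ * θ * I)` times its imaginary part. -/
noncomputable def padeRem (κ : ℝ) (n : ℕ) (θ : ℝ) : ℂ :=
  padeNum κ (exp (θ * I)) n * exp (-(κ * θ) * I)

lemma padeRem_add_two (κ : ℝ) (n : ℕ) (θ : ℝ) : padeRem κ (n + 2) θ =
    ((2 * n + 3) * Real.cos θ) • padeRem κ (n + 1) θ +
      (((n + 1) ^ 2 - κ ^ 2) * Real.sin θ ^ 2) • padeRem κ n θ := by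
  simp only [padeRem, padeNum, exp_ofReal_mul_I_re, exp_ofReal_mul_I_im, add_mul, smul_mul_assoc]

lemma hasDerivAt_padeRem_zero (κ θ : ℝ) :
    HasDerivAt (padeRem κ 0) (-(κ * I) * padeRem κ 0 θ) θ := by
  have h := (((hasDerivAt_id θ).ofReal_comp.const_mul (κ : ℂ)).neg.mul_const I).cexp
  refine (h.congr_of_eventuallyEq (.of_forall fun t => ?_)).congr_deriv ?_
  · simp [padeRem, padeNum]
  · simp only [padeRem, padeNum, one_mul, Pi.neg_apply, id_eq, ofReal_one, mul_one]
    ring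

lemma padeRem_one (κ θ : ℝ) :
    padeRem κ 1 θ = (Real.cos θ + κ * Real.sin θ * I) * padeRem κ 0 θ := by
  simp only [padeRem, padeNum, exp_ofReal_mul_I_re, exp_ofReal_mul_I_im, mk_eq_add_mul_I, one_mul]
  push_cast
  rfl

lemma hasDerivAt_padeRem_one (κ θ : ℝ) :
    HasDerivAt (padeRem κ 1) (-((1 - κ ^ 2) * Real.sin θ) • padeRem κ 0 θ) θ := by
  have h := ((Real.hasDerivAt_cos θ).ofReal_comp.add
    (((Real.hasDerivAt_sin θ).ofReal_comp.const_mul (κ : ℂ)).mul_const I)).mul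
    (hasDerivAt_padeRem_zero κ θ)
  rw [funext (padeRem_one κ)]
  refine h.congr_deriv ?_
  simp only [real_smul, Pi.add_apply]
  push_cast
  linear_combination (-κ ^ 2 * sin θ * padeRem κ 0 θ : ℂ) * I_sq

lemma hasDerivAt_padeRem (κ : ℝ) (n : ℕ) (θ : ℝ) : HasDerivAt (padeRem κ (n + 1))
    (-(((n + 1) ^ 2 - κ ^ 2) * Real.sin θ) • padeRem κ n θ) θ := by
  suffices h : (∃ g, HasDerivAt (padeRem κ n) g θ ∧ Real.sin θ • g =
      ((2 * n + 1) * Real.cos θ) • padeRem κ n θ - padeRem κ (n + 1) θ) ∧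
      HasDerivAt (padeRem κ (n + 1)) (-(((n + 1) ^ 2 - κ ^ 2) * Real.sin θ) • padeRem κ n θ) θ from
    h.2
  induction n with
  | zero =>
    refine ⟨⟨_, hasDerivAt_padeRem_zero κ θ, ?_⟩, ?_⟩
    · simp only [zero_add, padeRem_one, real_smul]
      push_cast
      ring
    · simpa using hasDerivAt_padeRem_one κ θ
  | succ n ih =>
    obtain ⟨⟨g, hg, hgn⟩, hn⟩ := ih
    refine ⟨⟨_, hn, ?_⟩, ?_⟩
    · rw [padeRem_add_two]
      simp only [real_smul]
      push_cast
      ring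
    · have h := (((Real.hasDerivAt_cos θ).const_mul (2 * n + 3 : ℝ)).smul hn).add
        ((((Real.hasDerivAt_sin θ).pow 2).const_mul ((n + 1 : ℝ) ^ 2 - κ ^ 2)).smul hg)
      rw [funext (padeRem_add_two κ n)]
      refine h.congr_deriv ?_
      simp only [real_smul, Pi.pow_apply] at hgn ⊢
      push_cast at hgn ⊢
      linear_combination (((n : ℂ) + 1) ^ 2 - κ ^ 2) * sin θ * hgn

lemma abs_im_padeRem_zero_le (κ : ℝ) {θ : ℝ} (hθ : 0 ≤ θ) : |(padeRem κ 0 θ).im| ≤ |κ| * θ := by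
  have him : (padeRem κ 0 θ).im = Real.sin (-(κ * θ)) := by
    rw [← exp_ofReal_mul_I_im]
    simp [padeRem, padeNum]
  rw [him]
  exact Real.abs_sin_le_abs.trans_eq (by rw [abs_neg, abs_mul, abs_of_nonneg hθ])

lemma abs_im_padeRem_le (hκ : |κ| ≤ 1) (n : ℕ) : ∀ θ ∈ Set.Icc 0 Real.pi,
    |(padeRem κ n θ).im| ≤ n ! * (1 - Real.cos θ) ^ n * (|κ| * θ) := by
  induction n with
  | zero => simpa using fun θ hθ _ => abs_im_padeRem_zero_le κ hθ
  | succ n ih =>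
    have hderiv (θ : ℝ) := imCLM.hasFDerivAt.comp_hasDerivAt θ (hasDerivAt_padeRem κ n θ)
    have hbound (θ : ℝ) := ((((Real.hasDerivAt_cos θ).const_sub 1).pow (n + 1)).const_mul
      ((n + 1)! : ℝ)).mul ((hasDerivAt_id θ).const_mul |κ|)
    refine fun θ hθ => image_norm_le_of_norm_deriv_right_le_deriv_boundary
      (fun θ _ => (hderiv θ).continuousAt.continuousWithinAt)
      (fun θ _ => (hderiv θ).hasDerivWithinAt) ?_ hbound ?_ hθ
    · simp [padeRem, im_padeNum_eq_zero]
    · rintro θ ⟨hθ₀, hθ₁⟩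
      obtain ⟨hc₀, hc₁⟩ := sq_sub_sq_mem_Icc hκ n
      have hsin : 0 ≤ Real.sin θ := Real.sin_nonneg_of_nonneg_of_le_pi hθ₀ hθ₁.le
      have hcos : 0 ≤ 1 - Real.cos θ := sub_nonneg.mpr (Real.cos_le_one θ)
      have hfac : ((n + 1)! : ℝ) = (n + 1) * n ! := mod_cast Nat.factorial_succ n
      calc ‖imCLM (-(((n + 1) ^ 2 - κ ^ 2) * Real.sin θ) • padeRem κ n θ)‖
          = ((n + 1) ^ 2 - κ ^ 2) * Real.sin θ * |(padeRem κ n θ).im| := by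
            rw [map_smul, norm_smul, norm_neg, Real.norm_of_nonneg (mul_nonneg hc₀ hsin)]
            rfl
        _ ≤ (n + 1) ^ 2 * Real.sin θ * (n ! * (1 - Real.cos θ) ^ n * (|κ| * θ)) := by
            gcongr
            exact ih θ ⟨hθ₀, hθ₁.le⟩
        _ ≤ (n + 1) ^ 2 * Real.sin θ * (n ! * (1 - Real.cos θ) ^ n * (|κ| * θ)) +
            (n + 1)! * (1 - Real.cos θ) ^ (n + 1) * |κ| := by
            have := pow_nonneg hcos (n + 1)
            exact le_add_of_nonneg_right (by positivity)
        _ = _ := by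
            simp only [Nat.add_sub_cancel, Pi.pow_apply, id_eq, hfac]
            push_cast
            ring

lemma abs_im_padeNum_mul_exp_le (hκ : |κ| ≤ 1) {a : ℂ} (ha : 0 ≤ a.im) (n : ℕ) :
    |(padeNum κ a n * exp (-(κ * arg a) * I)).im| ≤
      n ! * (‖a‖ - a.re) ^ n * (|κ| * arg a) := by
  have ha' : ‖a‖ • exp (arg a * I) = a := by rw [real_smul, norm_mul_exp_arg_mul_I]
  have h : padeNum κ a n * exp (-(κ * arg a) * I) = ‖a‖ ^ n • padeRem κ n (arg a) := by
    rw [padeRem, ← smul_mul_assoc, ← padeNum_real_smul, ha']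
  have hre : ‖a‖ * (1 - Real.cos (arg a)) = ‖a‖ - a.re := by
    rw [mul_one_sub, norm_mul_cos_arg]
  rw [h, smul_im, smul_eq_mul, abs_mul, abs_of_nonneg (by positivity), ← hre, mul_pow]
  refine (mul_le_mul_of_nonneg_left (abs_im_padeRem_le hκ n _ ⟨arg_nonneg_iff.mpr ha, arg_le_pi a⟩)
    (by positivity)).trans_eq ?_
  ring

end Remainder

lemma arg_le_im_div_re {z : ℂ} (hre : 0 < z.re) (him : 0 ≤ z.im) : arg z ≤ z.im / z.re := by
  rw [← tan_arg]
  exact Real.le_tan (arg_nonneg_iff.mpr him)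
    (abs_lt.mp (abs_arg_lt_pi_div_two_iff.mpr (.inl hre))).2

theorem exists_gaussianInt_approx {a : GaussianInt} (ha : 0 < a.im) {κ : ℝ} {k : ℤ} {d r e N : ℕ}
    (hκ : κ = k / d) (hκ₁ : |κ| ≤ 1) (hκ₂ : ∀ m : ℤ, κ ≠ m) (hdr : d ∣ r ^ N)
    (hrd : r * d = 2 * e) (he : e ≠ 0) :
    ∃ w : ℕ → GaussianInt, ∀ n, ‖(w n : ℂ)‖ ≤ (4 * e * ‖(a : ℂ)‖) ^ n ∧
      |(w n * exp (-(κ * arg a) * I)).im| ≤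
        (2 * e * (‖(a : ℂ)‖ - a.re)) ^ n * (|κ| * arg a) ∧
      (w (n + 1) * star (w n)).im ≠ 0 := by
  have hd : d ≠ 0 := by
    rintro rfl
    exact hκ₂ 0 (by simp [hκ])
  have ha' : 0 < (a : ℂ).im := by
    rw [← GaussianInt.intCast_im]
    exact_mod_cast ha
  choose w hw using exists_gaussianInt_eq_padeNum k hd hdr hrd ha.ne'
  rw [← hκ] at hw
  set c : ℕ → ℝ := fun n => (2 * e) ^ n / (n ! : ℝ)
  have hc (n : ℕ) : 0 < c n := by positivity
  have hwc (n : ℕ) : (w n : ℂ) = c n * padeNum κ a n := by rw [hw]; simp [c]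
  have hcn (n : ℕ) : c n * n ! = (2 * e) ^ n := div_mul_cancel₀ _ (mod_cast n.factorial_ne_zero)
  refine ⟨w, fun n => ⟨?_, ?_, ?_⟩⟩
  · rw [hwc, norm_mul, norm_real, Real.norm_of_nonneg (hc n).le]
    calc c n * ‖padeNum κ a n‖ ≤ c n * (n ! * (2 * ‖(a : ℂ)‖) ^ n) := by
          gcongr
          exact norm_padeNum_le hκ₁ _ n
      _ = (4 * e * ‖(a : ℂ)‖) ^ n := by
          rw [show 4 * e * ‖(a : ℂ)‖ = 2 * e * (2 * ‖(a : ℂ)‖) by ring, mul_pow (2 * e : ℝ), ← hcn,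
            mul_assoc]
  · rw [hwc, mul_assoc, im_ofReal_mul, abs_mul, abs_of_pos (hc n), GaussianInt.intCast_re]
    calc c n * _ ≤ c n * (n ! * (‖(a : ℂ)‖ - (a : ℂ).re) ^ n * (|κ| * arg a)) := by
          gcongr
          exact abs_im_padeNum_mul_exp_le hκ₁ ha'.le n
      _ = _ := by
          rw [mul_pow, ← hcn]
          ring
  · have hcast : ((w (n + 1) * star (w n) : GaussianInt) : ℂ) =
        (c (n + 1) * c n : ℝ) * (padeNum κ a (n + 1) * conj (padeNum κ a n)) := by
      rw [map_mul, GaussianInt.toComplex_star, hwc, hwc, map_mul, conj_ofReal]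
      push_cast
      ring
    rw [← Int.cast_ne_zero (α := ℝ), GaussianInt.intCast_im, hcast, im_ofReal_mul]
    exact mul_ne_zero (mul_pos (hc _) (hc _)).ne' (im_padeNum_succ_mul_conj_ne_zero hκ₂ ha'.ne' n)

section LinearForms

variable {γ w w₀ w₁ : GaussianInt}

lemma one_le_of_im_mul_star_ne_zero {l : ℂ} (hl : ‖l‖ = 1) (h : (γ * star w).im ≠ 0) :
    1 ≤ |(γ * l).im| * ‖(w : ℂ)‖ + ‖(γ : ℂ)‖ * |(w * l).im| := by
  have hll : l * conj l = 1 := by rw [mul_conj, normSq_eq_norm_sq, hl]; norm_num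
  have hcast : ((γ * star w : GaussianInt) : ℂ) = (γ * l) * conj (w * l) := by
    rw [map_mul, GaussianInt.toComplex_star, map_mul]
    linear_combination (-(γ : ℂ) * conj (w : ℂ)) * hll
  have hre (z : GaussianInt) : |(z * l).re| ≤ ‖(z : ℂ)‖ := by
    simpa [hl] using abs_re_le_norm (z * l)
  calc (1 : ℝ) ≤ |((γ * star w).im : ℝ)| := mod_cast Int.one_le_abs h
    _ = |(γ * l).im * (w * l).re - (γ * l).re * (w * l).im| := by
      rw [GaussianInt.intCast_im, hcast, mul_im, conj_re, conj_im]
      ring_nf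
    _ ≤ |(γ * l).im| * |(w * l).re| + |(γ * l).re| * |(w * l).im| := by
      simpa only [abs_mul] using abs_sub ((γ * l).im * (w * l).re) ((γ * l).re * (w * l).im)
    _ ≤ _ := by gcongr <;> exact hre _

lemma im_mul_star_ne_zero_or (hγ : γ ≠ 0) (hw : (w₁ * star w₀).im ≠ 0) :
    (γ * star w₀).im ≠ 0 ∨ (γ * star w₁).im ≠ 0 := by
  have hdet : γ.norm * (w₁ * star w₀).im =
      (γ * star w₀).im * (γ * star w₁).re - (γ * star w₀).re * (γ * star w₁).im := by
    simp only [Zsqrtd.norm_def, Zsqrtd.im_mul, Zsqrtd.re_mul, Zsqrtd.re_star, Zsqrtd.im_star]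
    ring
  by_contra! h
  rw [h.1, h.2, zero_mul, mul_zero, sub_zero] at hdet
  exact mul_ne_zero (GaussianInt.norm_pos.mpr hγ).ne' hw hdet

lemma one_le_of_approx {l : ℂ} (hl : ‖l‖ = 1) {w : ℕ → GaussianInt} {Q E δ : ℝ} (hQ : 1 ≤ Q)
    (hE : 1 ≤ E) (hnorm : ∀ n, ‖(w n : ℂ)‖ ≤ Q ^ n) (him : ∀ n, |(w n * l).im| ≤ δ / E ^ n)
    (hdet : ∀ n, (w (n + 1) * star (w n)).im ≠ 0) (hγ : γ ≠ 0) (n : ℕ) :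
    1 ≤ |(γ * l).im| * Q ^ (n + 1) + ‖(γ : ℂ)‖ * (δ / E ^ n) := by
  have hδ : 0 ≤ δ := by simpa using (abs_nonneg _).trans (him 0)
  have hbound (m : ℕ) (hm₀ : n ≤ m) (hm₁ : m ≤ n + 1) (h : (γ * star (w m)).im ≠ 0) :
      1 ≤ |(γ * l).im| * Q ^ (n + 1) + ‖(γ : ℂ)‖ * (δ / E ^ n) := by
    refine (one_le_of_im_mul_star_ne_zero hl h).trans ?_
    gcongr
    · exact (hnorm m).trans (pow_le_pow_right₀ hQ hm₁)
    · exact (him m).trans (by gcongr)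
  exact (im_mul_star_ne_zero_or hγ (hdet n)).elim (hbound n le_rfl n.le_succ)
    (hbound (n + 1) n.le_succ le_rfl)

end LinearForms

lemma lt_pow_of_forall_pow_le {V E Q K : ℝ} {p m : ℕ} (hE : 1 < E) (hV : 1 ≤ V) (hQ : 0 < Q)
    (hQE : Q < E ^ p) (hK : 2 * K * Q < (E ^ p / Q) ^ m)
    (h : ∀ n : ℕ, V ^ p ≤ K * Q ^ (n + 1) + V ^ p * (V / (2 * E ^ (n + 1)))) : V < E ^ m := by
  by_contra! hmV
  obtain ⟨n, hnV, hVn⟩ := exists_nat_pow_near hV hE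
  have : 0 < E := one_pos.trans hE
  have hmn : m ≤ n := Nat.lt_succ_iff.mp ((pow_lt_pow_iff_right₀ hE).mp (hmV.trans_lt hVn))
  have hhalf : V / (2 * E ^ (n + 1)) ≤ 1 / 2 := by
    rw [div_le_div_iff₀ (by positivity) two_pos]
    linarith
  have hVp : V ^ p ≤ 2 * K * Q * Q ^ n := by
    have := mul_le_mul_of_nonneg_left hhalf (pow_nonneg (zero_le_one.trans hV) p)
    linear_combination 2 * h n + 2 * this
  have hlow : (E ^ p / Q) ^ n ≤ 2 * K * Q := by
    rw [div_pow, div_le_iff₀ (by positivity), pow_right_comm]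
    exact (pow_le_pow_left₀ (by positivity) hnV p).trans hVp
  exact (hlow.trans_lt hK).not_ge (pow_le_pow_right₀ ((one_le_div hQ).mpr hQE.le) hmn)

section FourthPower

lemma exists_norm_mul_abs_im_le (z : ℂ) : ∃ ε : GaussianInt,
    (ε = 1 ∨ ε = ⟨0, 1⟩) ∧ ‖z‖ * |(ε * z).im| ≤ |(z ^ 2).im| := by
  have hnorm : ‖z‖ ≤ |z.re| + |z.im| := norm_le_abs_re_add_abs_im z
  have hsq : |(z ^ 2).im| = 2 * |z.re| * |z.im| := by
    rw [sq, mul_im, mul_comm z.im, ← two_mul, abs_mul, abs_mul, abs_two, mul_assoc]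
  rcases le_total |z.im| |z.re| with h | h
  · refine ⟨1, .inl rfl, ?_⟩
    rw [hsq, map_one, one_mul]
    nlinarith [abs_nonneg z.im]
  · refine ⟨⟨0, 1⟩, .inr rfl, ?_⟩
    have him : (((⟨0, 1⟩ : GaussianInt) : ℂ) * z).im = z.re := by simp [GaussianInt.toComplex_def']
    rw [hsq, him]
    nlinarith [abs_nonneg z.re]

lemma exists_sq_eq_natCast_mul {ε : GaussianInt} (hε : ε = 1 ∨ ε = ⟨0, 1⟩) :
    ∃ (ζ : GaussianInt) (c : ℕ), ζ ^ 2 = c * ε ∧ c ≤ 2 ∧ 1 ≤ ‖(ζ : ℂ)‖ ∧ ‖(ζ : ℂ)‖ ≤ 2 := by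
  rcases hε with rfl | rfl
  · exact ⟨1, 1, by simp⟩
  · have hnorm : ‖((⟨1, 1⟩ : GaussianInt) : ℂ)‖ ^ 2 = 2 := by
      rw [Complex.sq_norm, ← GaussianInt.intCast_real_norm]
      norm_num [Zsqrtd.norm_def]
    refine ⟨⟨1, 1⟩, 2, by decide, le_rfl, ?_, ?_⟩ <;>
      nlinarith [norm_nonneg ((⟨1, 1⟩ : GaussianInt) : ℂ)]

-- If `im (z ^ 4)` is small, `z` is close to one of the four lines on which fourth powers are real.
-- These are permuted by multiplication by `1 + I`, so some `ω` moves `z` close to the real axis.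
lemma exists_abs_im_mul_norm_pow_three_le (z : ℂ) : ∃ ω : GaussianInt, ω ≠ 0 ∧ ‖(ω : ℂ)‖ ≤ 2 ∧
    |(ω * z).im| * ‖z‖ ^ 3 ≤ 2 * |(z ^ 4).im| := by
  obtain ⟨ε, hε, h⟩ := exists_norm_mul_abs_im_le (z ^ 2)
  obtain ⟨ζ, c, hζ, hc, hζ₁, hζ₂⟩ := exists_sq_eq_natCast_mul hε
  obtain ⟨η, hη, h'⟩ := exists_norm_mul_abs_im_le (ζ * z)
  have hη₁ : ‖(η : ℂ)‖ = 1 := by rcases hη with rfl | rfl <;> simp [GaussianInt.toComplex_def']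
  have hω : ‖((η * ζ : GaussianInt) : ℂ)‖ = ‖(ζ : ℂ)‖ := by rw [map_mul, norm_mul, hη₁, one_mul]
  have hsq : (ζ * z : ℂ) ^ 2 = (c : ℝ) * (ε * z ^ 2) := by
    have : (ζ : ℂ) ^ 2 = c * ε := by simpa using congrArg GaussianInt.toComplex hζ
    push_cast
    linear_combination z ^ 2 * this
  rw [norm_pow, ← pow_mul] at h
  rw [hsq, im_ofReal_mul, abs_mul, Nat.abs_cast, norm_mul, ← mul_assoc (η : ℂ), ← map_mul] at h'
  refine ⟨η * ζ, ?_, hω.trans_le hζ₂, ?_⟩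
  · rintro h0
    norm_num [← hω, h0] at hζ₁
  calc |((η * ζ : GaussianInt) * z).im| * ‖z‖ ^ 3
      ≤ ‖z‖ ^ 2 * (‖(ζ : ℂ)‖ * ‖z‖ * |((η * ζ : GaussianInt) * z).im|) := by
        have := mul_le_mul_of_nonneg_right hζ₁
          (by positivity : 0 ≤ |((η * ζ : GaussianInt) * z).im| * ‖z‖ ^ 3)
        linear_combination this
    _ ≤ ‖z‖ ^ 2 * (2 * |(ε * z ^ 2).im|) := by
        refine mul_le_mul_of_nonneg_left (h'.trans ?_) (sq_nonneg _)
        exact mul_le_mul_of_nonneg_right (mod_cast hc) (abs_nonneg _)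
    _ ≤ 2 * |(z ^ 4).im| := by linear_combination 2 * h

end FourthPower

section Application

lemma norm_lt_pow_of_abs_im_pow_four_le {l : ℂ} (hl : ‖l‖ = 1) {w : ℕ → GaussianInt} {Q E δ K : ℝ}
    {m : ℕ} (hQ : 1 ≤ Q) (hE : 1 < E) (hδ : 4 * δ * E ≤ 1) (hnorm : ∀ n, ‖(w n : ℂ)‖ ≤ Q ^ n)
    (him : ∀ n, |(w n * l).im| ≤ δ / E ^ n) (hdet : ∀ n, (w (n + 1) * star (w n)).im ≠ 0)
    (hQE : Q < E ^ 3) (hK : 4 * K * Q < (E ^ 3 / Q) ^ m) {β : GaussianInt} (hβ : β ≠ 0)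
    (h : |((β * l) ^ 4).im| ≤ K) : ‖(β : ℂ)‖ < E ^ m := by
  obtain ⟨ω, hω₀, hω, hωim⟩ := exists_abs_im_mul_norm_pow_three_le (β * l)
  rw [norm_mul, hl, mul_one, ← mul_assoc, ← map_mul] at hωim
  have hωβ : ‖((ω * β : GaussianInt) : ℂ)‖ ≤ 2 * ‖(β : ℂ)‖ := by
    rw [map_mul, norm_mul]
    gcongr
  have hβ₁ : 1 ≤ ‖(β : ℂ)‖ := by
    rw [← one_le_sq_iff₀ (norm_nonneg _), Complex.sq_norm, ← GaussianInt.intCast_real_norm]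
    exact_mod_cast GaussianInt.norm_pos.mpr hβ
  have hδ₀ : 0 ≤ δ := by simpa using (abs_nonneg _).trans (him 0)
  have : 0 < E := one_pos.trans hE
  set V := ‖(β : ℂ)‖
  have herr (n : ℕ) : 2 * V * (δ / E ^ n) ≤ V / (2 * E ^ (n + 1)) := by
    rw [mul_div_assoc', div_le_div_iff₀ (by positivity) (by positivity)]
    have := mul_le_mul_of_nonneg_left hδ (by positivity : 0 ≤ V * E ^ n)
    linear_combination this
  refine lt_pow_of_forall_pow_le (K := 2 * K) hE hβ₁ (one_pos.trans_le hQ) hQE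
    (by linear_combination hK) fun n => ?_
  calc V ^ 3 ≤ V ^ 3 * (|((ω * β : GaussianInt) * l).im| * Q ^ (n + 1) +
        ‖((ω * β : GaussianInt) : ℂ)‖ * (δ / E ^ n)) :=
        le_mul_of_one_le_right (by positivity)
          (one_le_of_approx hl hQ hE.le hnorm him hdet (mul_ne_zero hω₀ hβ) n)
    _ = |((ω * β : GaussianInt) * l).im| * V ^ 3 * Q ^ (n + 1) +
        V ^ 3 * (‖((ω * β : GaussianInt) : ℂ)‖ * (δ / E ^ n)) := by ring
    _ ≤ 2 * K * Q ^ (n + 1) + V ^ 3 * (V / (2 * E ^ (n + 1))) := by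
        gcongr ?_ * _ + _ * ?_
        · exact hωim.trans (mul_le_mul_of_nonneg_left h zero_le_two)
        · exact (mul_le_mul_of_nonneg_right hωβ (by positivity)).trans (herr n)

lemma norm_mul_mul_exp_arg_pow (a b : ℂ) {m : ℕ} (hm : m ≠ 0) :
    ‖a‖ * (b * exp (-((1 / m : ℝ) * arg a) * I)) ^ m = b ^ m * conj a := by
  have hexp : exp (-((1 / m : ℝ) * arg a) * I) ^ m = exp (-arg a * I) := by
    rw [← exp_nat_mul]
    congr 1
    push_cast
    field_simp
  have hconj : ‖a‖ * exp (-arg a * I) = conj a := by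
    conv_rhs => rw [← norm_mul_exp_arg_mul_I a, map_mul, conj_ofReal, ← exp_conj, map_mul,
      conj_ofReal, conj_I, mul_neg, ← neg_mul]
  rw [mul_pow, hexp, mul_left_comm, hconj]

lemma norm_sq_239_add_I : ‖((⟨239, 1⟩ : GaussianInt) : ℂ)‖ ^ 2 = 57122 := by
  rw [Complex.sq_norm, ← GaussianInt.intCast_real_norm]
  norm_num [Zsqrtd.norm_def]

lemma norm_239_add_I_mem_Icc :
    ‖((⟨239, 1⟩ : GaussianInt) : ℂ)‖ ∈ Set.Icc (239 : ℝ) (239 + 1 / 478) := by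
  have := norm_sq_239_add_I
  have := norm_nonneg ((⟨239, 1⟩ : GaussianInt) : ℂ)
  constructor <;> nlinarith

lemma exists_gaussianInt_approx_239_add_I : ∃ w : ℕ → GaussianInt, ∀ n,
    ‖(w n : ℂ)‖ ≤ 3832 ^ n ∧
    |(w n * exp (-((1 / 4 : ℝ) * arg (⟨239, 1⟩ : GaussianInt)) * I)).im| ≤
      1 / 239 / (239 / 4) ^ n ∧
    (w (n + 1) * star (w n)).im ≠ 0 := by
  obtain ⟨hlow, hupp⟩ := norm_239_add_I_mem_Icc
  have hre : ((⟨239, 1⟩ : GaussianInt) : ℂ).re = 239 := by simp [GaussianInt.toComplex_def']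
  have him : ((⟨239, 1⟩ : GaussianInt) : ℂ).im = 1 := by simp [GaussianInt.toComplex_def']
  have harg : arg (⟨239, 1⟩ : GaussianInt) ≤ 1 / 239 := by
    have := arg_le_im_div_re (z := (⟨239, 1⟩ : GaussianInt)) (by norm_num [hre]) (by norm_num [him])
    rwa [hre, him] at this
  have hquarter (m : ℤ) : (1 / 4 : ℝ) ≠ m := by
    intro h
    have : (1 : ℤ) = 4 * m := by
      have : (1 : ℝ) = 4 * m := by linarith
      exact_mod_cast this
    omega
  obtain ⟨w, hw⟩ := exists_gaussianInt_approx (a := ⟨239, 1⟩) one_pos (κ := 1 / 4) (k := 1) (d := 4)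
    (r := 2) (e := 4) (N := 2) (by norm_num) (by norm_num [abs_of_pos]) hquarter (by norm_num)
    (by norm_num) (by norm_num)
  refine ⟨w, fun n => ⟨(hw n).1.trans ?_, (hw n).2.1.trans ?_, (hw n).2.2⟩⟩
  · gcongr
    push_cast
    linarith
  · have hupp' : 2 * 4 * (‖((⟨239, 1⟩ : GaussianInt) : ℂ)‖ - 239) ≤ (239 / 4)⁻¹ := by
      norm_num
      linarith
    have harg₀ : 0 ≤ arg (⟨239, 1⟩ : GaussianInt) := arg_nonneg_iff.mpr (by norm_num [him])
    rw [div_eq_mul_inv (1 / 239 : ℝ), mul_comm (1 / 239 : ℝ), ← inv_pow, abs_of_pos (by norm_num)]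
    push_cast
    gcongr
    linarith

lemma abs_im_rotated_pow_four_le {ξ : GaussianInt}
    (hξ : |((⟨1, 1⟩ : GaussianInt) * ξ ^ 4).im| = 1) :
    |((((ξ * ⟨3, -2⟩ : GaussianInt) : ℂ) *
      exp (-((1 / 4 : ℝ) * arg (⟨239, 1⟩ : GaussianInt)) * I)) ^ 4).im| ≤ 120 := by
  set a : GaussianInt := ⟨239, 1⟩
  set β : GaussianInt := ξ * ⟨3, -2⟩
  have hrot : β ^ 4 * star a = (-28561 : ℤ) * (⟨1, 1⟩ * ξ ^ 4) := by
    have : (⟨3, -2⟩ : GaussianInt) ^ 4 * star a = (-28561 : ℤ) * ⟨1, 1⟩ := by decide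
    rw [mul_pow, mul_assoc, this]
    ring
  have him : ‖(a : ℂ)‖ * |((β * exp (-((1 / 4 : ℝ) * arg a) * I)) ^ 4).im| = 28561 := by
    have h := norm_mul_mul_exp_arg_pow a β four_ne_zero
    rw [Nat.cast_ofNat] at h
    rw [← abs_norm, ← abs_mul, ← im_ofReal_mul, h, ← GaussianInt.toComplex_star, ← map_pow,
      ← map_mul, hrot, ← GaussianInt.intCast_im, Zsqrtd.im_smul, ← Int.cast_abs, abs_mul, hξ]
    norm_num
  nlinarith [norm_239_add_I_mem_Icc.1]

lemma norm_lt_of_abs_im_eq_one {ξ : GaussianInt}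
    (hξ : |((⟨1, 1⟩ : GaussianInt) * ξ ^ 4).im| = 1) : ξ.norm < 2 * 10 ^ 13 := by
  have hξ₀ : ξ ≠ 0 := by
    rintro rfl
    simp at hξ
  have hl : ‖exp (-((1 / 4 : ℝ) * arg (⟨239, 1⟩ : GaussianInt)) * I)‖ = 1 := by
    have := norm_exp_ofReal_mul_I (-(1 / 4 * arg (⟨239, 1⟩ : GaussianInt)))
    rwa [ofReal_neg, ofReal_mul] at this
  obtain ⟨w, hw⟩ := exists_gaussianInt_approx_239_add_I
  have hlt : ‖((ξ * ⟨3, -2⟩ : GaussianInt) : ℂ)‖ < (239 / 4) ^ 4 :=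
    norm_lt_pow_of_abs_im_pow_four_le hl (by norm_num) (by norm_num) (by norm_num)
      (fun n => (hw n).1) (fun n => (hw n).2.1) (fun n => (hw n).2.2) (by norm_num) (by norm_num)
      (mul_ne_zero hξ₀ (by decide)) (abs_im_rotated_pow_four_le hξ)
  have hnorm : ‖((ξ * ⟨3, -2⟩ : GaussianInt) : ℂ)‖ ^ 2 = 13 * ξ.norm := by
    rw [Complex.sq_norm, ← GaussianInt.intCast_real_norm, Zsqrtd.norm_mul, mul_comm]
    norm_num [Zsqrtd.norm_def]
  have hlt' : (13 * ξ.norm : ℝ) < ((239 / 4) ^ 4) ^ 2 := by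
    rw [← hnorm]
    gcongr
  have : (ξ.norm : ℝ) < 2 * 10 ^ 13 := by
    norm_num at hlt' ⊢
    linarith
  exact_mod_cast this

end Application

theorem stmt_0 (x y : ℤ) (hx : 0 < x) (hy : 0 < y) :
    x ^ 2 = 2 * y ^ 4 - 1 ↔ (x = 1 ∧ y = 1) ∨ (x = 239 ∧ y = 13) := by
  constructor
  · intro h
    obtain ⟨ξ, rfl, hξ⟩ := exists_abs_im_mul_pow_four_eq_one hy h
    exact eq_one_or_eq_thirteen_of_lt hx hy (norm_lt_of_abs_im_eq_one hξ) h
  · rintro (⟨rfl, rfl⟩ | ⟨rfl, rfl⟩) <;> norm_num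
end

section
/- Let (xₙ) and (tₙ) be the integer sequences with x₀ = 1, t₀ = 1 and xₙ₊₁ = 3xₙ + 4tₙ, tₙ₊₁ = 2xₙ + 3tₙ. Then every pair of positive integers (x, t) satisfying x² − 2t² + 1 = 0 is equal to (xₙ, tₙ) for some natural number n. -/
/-!
The quotient of two elements of norm `-1` in `ℤ√d` has norm `1`. Hence every positive solution of
the negative Pell equation `a ^ 2 - d * b ^ 2 = -1` has the form `a + b√d = (p + q√d) * u`, with
`p + q√d` a fixed solution and `u` a solution of the Pell equation. Dividing by `u` shows that
`u.y < 0` would force `p > u.x`, so if `p` is at most the `x`-coordinate of the fundamental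
solution `a₁`, then `u` is a power of `a₁` with a natural exponent. The recurrence is
multiplication by `a₁`, which is `3 + 2√2` when `d = 2`.
-/

open Pell

section NegativePell

variable {d p q a b : ℤ} {a₁ : Solution₁ d}

theorem mul_lt_mul_mul_of_negPell (hd : 0 < d) (hq : 0 < q) (hb : 0 < b)
    (hpq : p ^ 2 - d * q ^ 2 = -1) (hab : a ^ 2 - d * b ^ 2 = -1) :
    p * a < d * (q * b) := by
  have hp_sq : p ^ 2 < d * q ^ 2 := by linarith
  have ha_sq : a ^ 2 < d * b ^ 2 := by linarith
  have h_sq : (p * a) ^ 2 < (d * (q * b)) ^ 2 :=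
    calc (p * a) ^ 2 = p ^ 2 * a ^ 2 := mul_pow ..
      _ < (d * q ^ 2) * (d * b ^ 2) :=
        mul_lt_mul'' hp_sq ha_sq (sq_nonneg p) (sq_nonneg a)
      _ = (d * (q * b)) ^ 2 := by ring
  exact lt_of_pow_lt_pow_left₀ 2 (by positivity) h_sq

theorem exists_solution₁_mul_eq_of_negPell (hd : 0 < d) (hq : 0 < q) (hb : 0 < b)
    (hpq : p ^ 2 - d * q ^ 2 = -1) (hab : a ^ 2 - d * b ^ 2 = -1) :
    ∃ u : Solution₁ d, 0 < u.x ∧ a = p * u.x + d * (q * u.y) ∧ b = p * u.y + q * u.x := by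
  -- The inverse of `p + q√d` is `-p + q√d`, so `u = (-p + q√d) * (a + b√d)`.
  refine ⟨.mk (d * (q * b) - p * a) (q * a - p * b) ?_, ?_, ?_, ?_⟩
  · linear_combination (a ^ 2 - d * b ^ 2) * hpq - hab
  · exact sub_pos.2 (mul_lt_mul_mul_of_negPell hd hq hb hpq hab)
  · rw [Solution₁.x_mk, Solution₁.y_mk]
    linear_combination a * hpq
  · rw [Solution₁.x_mk, Solution₁.y_mk]
    linear_combination b * hpq

theorem exists_fundamental_pow_mul_eq_of_negPell (h : IsFundamental a₁) (hq : 0 < q)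
    (hp : p ≤ a₁.x) (hpq : p ^ 2 - d * q ^ 2 = -1) (ha : 0 < a) (hb : 0 < b)
    (hab : a ^ 2 - d * b ^ 2 = -1) :
    ∃ n : ℕ, a = p * (a₁ ^ n).x + d * (q * (a₁ ^ n).y) ∧
      b = p * (a₁ ^ n).y + q * (a₁ ^ n).x := by
  have hd := h.d_pos
  obtain ⟨u, hu_x, ha_eq, hb_eq⟩ := exists_solution₁_mul_eq_of_negPell hd hq hb hpq hab
  have hu_y : 0 ≤ u.y := by
    by_contra! hu_neg
    have hu_ne_one : u.x ≠ 1 := fun hu_one => by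
      rw [Solution₁.eq_one_of_x_eq_one hd.ne' hu_one, Solution₁.y_one] at hu_neg
      exact hu_neg.false
    have ha₁_le : a₁.x ≤ u.x := h.x_le_x (lt_of_le_of_ne hu_x hu_ne_one.symm)
    have hp_eq : p = a * u.x + d * (b * -u.y) := by
      rw [ha_eq, hb_eq]
      linear_combination -p * u.prop
    have hb_term_pos : 0 < d * (b * -u.y) := mul_pos hd (mul_pos hb (neg_pos.2 hu_neg))
    have hu_x_le : u.x ≤ a * u.x := le_mul_of_one_le_left hu_x.le ha
    linarith
  obtain ⟨n, rfl⟩ := h.eq_pow_of_nonneg hu_x hu_y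
  exact ⟨n, ha_eq, hb_eq⟩

theorem eq_mul_solution₁_pow_of_recurrence {x t : ℕ → ℤ}
    (hx : ∀ n, x (n + 1) = a₁.x * x n + d * (a₁.y * t n))
    (ht : ∀ n, t (n + 1) = a₁.y * x n + a₁.x * t n) (n : ℕ) :
    x n = x 0 * (a₁ ^ n).x + d * (t 0 * (a₁ ^ n).y) ∧
      t n = x 0 * (a₁ ^ n).y + t 0 * (a₁ ^ n).x := by
  induction n with
  | zero => simp
  | succ n ih =>
    rw [pow_succ, Solution₁.x_mul, Solution₁.y_mul, hx, ht, ih.1, ih.2]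
    constructor <;> ring

theorem stmt_2_general (h : IsFundamental a₁) {x t : ℕ → ℤ} (hx0 : x 0 ≤ a₁.x) (ht0 : 0 < t 0)
    (h0 : x 0 ^ 2 - d * t 0 ^ 2 = -1)
    (hx : ∀ n, x (n + 1) = a₁.x * x n + d * (a₁.y * t n))
    (ht : ∀ n, t (n + 1) = a₁.y * x n + a₁.x * t n)
    (ha : 0 < a) (hb : 0 < b) (hab : a ^ 2 - d * b ^ 2 = -1) :
    ∃ n : ℕ, a = x n ∧ b = t n := by
  obtain ⟨n, ha_eq, hb_eq⟩ :=
    exists_fundamental_pow_mul_eq_of_negPell h ht0 hx0 h0 ha hb hab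
  obtain ⟨hx_eq, ht_eq⟩ := eq_mul_solution₁_pow_of_recurrence hx ht n
  exact ⟨n, ha_eq.trans hx_eq.symm, hb_eq.trans ht_eq.symm⟩

end NegativePell

theorem isFundamental_mk_three_two :
    IsFundamental (.mk 3 2 (by norm_num) : Solution₁ 2) := by
  refine ⟨by simp, by simp, fun {u} hu => ?_⟩
  have hu_ne_two : u.x ≠ 2 := fun hu_two => by
    have hprop := u.prop
    rw [hu_two] at hprop
    omega
  rw [Solution₁.x_mk]
  omega

theorem stmt_2 (x t : ℕ → ℤ) (hx0 : x 0 = 1) (ht0 : t 0 = 1)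
    (hx : ∀ n, x (n + 1) = 3 * x n + 4 * t n)
    (ht : ∀ n, t (n + 1) = 2 * x n + 3 * t n) :
    ∀ a b : ℤ, 0 < a → 0 < b → a ^ 2 - 2 * b ^ 2 + 1 = 0 →
      ∃ n : ℕ, a = x n ∧ b = t n := by
  intro a b ha hb hab
  have hx' (n : ℕ) : x (n + 1) = 3 * x n + 2 * (2 * t n) := by rw [hx]; ring
  exact stmt_2_general isFundamental_mk_three_two (by simp [hx0]) (by simp [ht0])
    (by simp [hx0, ht0]) hx' ht ha hb (eq_neg_of_add_eq_zero_left hab)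
end
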